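/- If p ∈ P and the chain element Sum.inl p lies in a Q-stopper, then p is in the image of g on Q, i.e., p ∈ g '' Q. -/

import Mathlib

def SB.Valid {α β : Type*} (P : Set α) (Q : Set β) : α ⊕ β → Prop
  | Sum.inl p => p ∈ P
  | Sum.inr q => q ∈ Q

def SB.step {α β : Type*} (f : α → β) (g : β → α) : α ⊕ β → α ⊕ β
  | Sum.inl p => Sum.inr (f p)
  | Sum.inr q => Sum.inl (g q)

def SB.ChainLE {α β : Type*} (f : α → β) (g : β → α) : α ⊕ β → α ⊕ β → Prop :=
  Relation.ReflTransGen (fun x y => y = SB.step f g x)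

def SB.Initial {α β : Type*} (P : Set α) (Q : Set β) (f : α → β) (g : β → α) :
    α ⊕ β → Prop
  | Sum.inl p => p ∉ g '' Q
  | Sum.inr q => q ∉ f '' P

def SB.InQStopper {α β : Type*} (P : Set α) (Q : Set β) (f : α → β) (g : β → α)
    (x : α ⊕ β) : Prop :=
  ∃ q ∈ Q, SB.Initial P Q f g (Sum.inr q) ∧ SB.ChainLE f g (Sum.inr q) x

namespace SB

variable {α β : Type*} {P : Set α} {Q : Set β} {f : α → β} {g : β → α} {x y : α ⊕ β}

theorem valid_step (hf : Set.MapsTo f P Q) (hg : Set.MapsTo g Q P) (hx : Valid P Q x) :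
    Valid P Q (step f g x) :=
  match x, hx with
  | Sum.inl _, hp => hf hp
  | Sum.inr _, hq => hg hq

theorem Valid.of_chainLE (hf : Set.MapsTo f P Q) (hg : Set.MapsTo g Q P) (hx : Valid P Q x)
    (hxy : ChainLE f g x y) : Valid P Q y := by
  induction hxy with
  | refl => exact hx
  | tail _ hstep hvalid => exact hstep ▸ valid_step hf hg hvalid

theorem Valid.not_initial_step (hx : Valid P Q x) : ¬ Initial P Q f g (step f g x) :=
  match x, hx with
  | Sum.inl _, hp => not_not_intro (Set.mem_image_of_mem f hp)
  | Sum.inr _, hq => not_not_intro (Set.mem_image_of_mem g hq)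

theorem Initial.eq_of_chainLE (hf : Set.MapsTo f P Q) (hg : Set.MapsTo g Q P)
    (hy : Initial P Q f g y) (hx : Valid P Q x) (hxy : ChainLE f g x y) : x = y := by
  obtain heq | ⟨z, hxz, rfl⟩ := Relation.ReflTransGen.cases_tail hxy
  · exact heq.symm
  · exact absurd hy (hx.of_chainLE hf hg hxz).not_initial_step

end SB

theorem mem_image_g_of_inQStopper_general {α β : Type*} {P : Set α} {Q : Set β}
    {f : α → β} {g : β → α} (hf : Set.MapsTo f P Q) (hg : Set.MapsTo g Q P)
    {q : β} (hq : q ∈ Q) {p : α} (hqp : SB.ChainLE f g (Sum.inr q) (Sum.inl p)) :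
    p ∈ g '' Q := by
  by_contra hp
  have hinitial : SB.Initial P Q f g (Sum.inl p) := hp
  have hvalid : SB.Valid P Q (Sum.inr q) := hq
  exact Sum.inr_ne_inl (hinitial.eq_of_chainLE hf hg hvalid hqp)

theorem mem_image_g_of_inQStopper {α β : Type*} (P : Set α) (Q : Set β)
    (f : α → β) (g : β → α)
    (hfm : Set.MapsTo f P Q) (hfi : Set.InjOn f P)
    (hgm : Set.MapsTo g Q P) (hgi : Set.InjOn g Q)
    (p : α) (hp : p ∈ P) (hq : SB.InQStopper P Q f g (Sum.inl p)) :
    p ∈ g '' Q := by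
  obtain ⟨q, hqQ, -, hqp⟩ := hq
  exact mem_image_g_of_inQStopper_general hfm hgm hqQ hqp
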